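/- Let A be an n×n complex matrix with Ind(A) = k and rank(A^k) = rank((A^k)~ A^k). If A = Â₁ + Â₂ and A = B̂₁ + B̂₂ are both m-core-EP decompositions of A, then Â₁ = B̂₁ and Â₂ = B̂₂; i.e., the m-core-EP decomposition is unique. -/

import Mathlib

/-!
Both first summands have the same column space, namely that of `A ^ k`. Indeed `A₂ * A₁ = 0` gives
`A ^ k = A₁ * X + A₂ ^ k = A₁ * X`, while `A ^ j * A₁ = A₁ ^ (j + 1)` together with
`rank (A₁ ^ 2) = rank A₁` gives `A₁ = A ^ k * Z`. Hence `B₁ = A₁ * X` and `A₁ = B₁ * Y`.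
From `A₁~ A₂ = 0` and `B₁~ B₂ = 0` one gets `B₁~ A₁ = B₁~ A = B₁~ B₁`, so
`B₁~ B₁ (Y - 1) = 0`; as `rank (B₁~ B₁) = rank B₁`, the matrix `B₁~` may be cancelled, leaving
`A₁ - B₁ = B₁ (Y - 1) = 0`.
-/

open Matrix

noncomputable section

/-- The Minkowski metric matrix `G = diag(1, -1, …, -1)`. -/
def mink (n : ℕ) : Matrix (Fin n) (Fin n) ℂ :=
  Matrix.diagonal (fun i => if (i : ℕ) = 0 then 1 else -1)

/-- The Minkowski adjoint `A~ = G A* G`. -/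
def madj {n : ℕ} (A : Matrix (Fin n) (Fin n) ℂ) : Matrix (Fin n) (Fin n) ℂ :=
  mink n * Aᴴ * mink n

/-- `k` is the index of `A`: the smallest positive integer with
`rank (A^(k+1)) = rank (A^k)`. -/
def IsInd {n : ℕ} (A : Matrix (Fin n) (Fin n) ℂ) (k : ℕ) : Prop :=
  0 < k ∧ (A ^ (k + 1)).rank = (A ^ k).rank ∧
    ∀ j, 0 < j → (A ^ (j + 1)).rank = (A ^ j).rank → k ≤ j

/-- `X` is an m-core-EP inverse of `A` (with `Ind(A) = k`). -/
def IsMCoreEP {n : ℕ} (A X : Matrix (Fin n) (Fin n) ℂ) (k : ℕ) : Prop :=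
  X * A * X = X ∧ X * A ^ (k + 1) = A ^ k ∧ madj (A * X) = A * X ∧
    ∃ Z : Matrix (Fin n) (Fin n) ℂ, X = A ^ k * Z

/-- `A = A₁ + A₂` is an m-core-EP decomposition of `A` (with `Ind(A) = k`). -/
def IsMCoreEPDecomp {n : ℕ} (A A₁ A₂ : Matrix (Fin n) (Fin n) ℂ) (k : ℕ) : Prop :=
  A = A₁ + A₂ ∧ (A₁ ^ 2).rank = A₁.rank ∧ (madj A₁ * A₁).rank = A₁.rank ∧
    A₂ ^ k = 0 ∧ madj A₁ * A₂ = 0 ∧ A₂ * A₁ = 0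

lemma mink_mul_mink (n : ℕ) : mink n * mink n = 1 := by
  unfold mink
  rw [Matrix.diagonal_mul_diagonal, ← Matrix.diagonal_one]
  congr 1
  ext i
  split_ifs <;> norm_num

lemma madj_mul {n : ℕ} (A B : Matrix (Fin n) (Fin n) ℂ) :
    madj (A * B) = madj B * madj A := by
  have h : madj B * madj A = mink n * Bᴴ * (mink n * mink n) * Aᴴ * mink n := by
    simp only [madj, Matrix.mul_assoc]
  rw [h, mink_mul_mink, madj, Matrix.conjTranspose_mul]
  simp only [Matrix.mul_assoc, Matrix.one_mul]

/-- If `rank (M N) = rank N`, then `M N` and `N` have the same kernel, so `M` can be cancelled. -/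
lemma mul_eq_zero_of_rank_mul_eq {n : ℕ} (M N W : Matrix (Fin n) (Fin n) ℂ)
    (h : (M * N).rank = N.rank) (hW : M * N * W = 0) : N * W = 0 := by
  have hle : LinearMap.ker N.mulVecLin ≤ LinearMap.ker (M * N).mulVecLin := by
    intro v hv
    simp only [LinearMap.mem_ker, Matrix.mulVecLin_apply] at hv ⊢
    rw [← Matrix.mulVec_mulVec, hv, Matrix.mulVec_zero]
  have hker : LinearMap.ker N.mulVecLin = LinearMap.ker (M * N).mulVecLin := by
    refine Submodule.eq_of_le_of_finrank_eq hle ?_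
    have h1 := LinearMap.finrank_range_add_finrank_ker N.mulVecLin
    have h2 := LinearMap.finrank_range_add_finrank_ker (M * N).mulVecLin
    unfold Matrix.rank at h
    omega
  refine Matrix.ext_of_mulVec_single fun i => ?_
  have hv : W *ᵥ Pi.single i 1 ∈ LinearMap.ker N.mulVecLin := by
    rw [hker, LinearMap.mem_ker, Matrix.mulVecLin_apply, Matrix.mulVec_mulVec, hW,
      Matrix.zero_mulVec]
  rw [LinearMap.mem_ker, Matrix.mulVecLin_apply, Matrix.mulVec_mulVec] at hv
  rw [hv, Matrix.zero_mulVec]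

/-- If `rank (M N) = rank M`, then `M N` and `M` have the same column space. -/
lemma exists_eq_mul_of_rank_mul_eq {n : ℕ} (M N : Matrix (Fin n) (Fin n) ℂ)
    (h : (M * N).rank = M.rank) : ∃ Y, M = M * N * Y := by
  have hle : LinearMap.range (M * N).mulVecLin ≤ LinearMap.range M.mulVecLin := by
    rintro _ ⟨v, rfl⟩
    exact ⟨N *ᵥ v, by simp [Matrix.mulVec_mulVec]⟩
  have hr := Submodule.eq_of_le_of_finrank_eq hle h
  have hc : ∀ i, ∃ y, (M * N) *ᵥ y = M *ᵥ Pi.single i 1 := fun i => by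
    have : M.mulVecLin (Pi.single i 1) ∈ LinearMap.range (M * N).mulVecLin := by
      rw [hr]
      exact ⟨_, rfl⟩
    exact this
  choose y hy using hc
  refine ⟨(Matrix.of y)ᵀ, Matrix.ext_of_mulVec_single fun i => ?_⟩
  rw [← Matrix.mulVec_mulVec, ← hy i, Matrix.mulVec_single_one]
  rfl

/-- In an m-core-EP decomposition, `A₁` and `A ^ k` have the same column space. -/
lemma IsMCoreEPDecomp.range_eq {n k : ℕ} {A A₁ A₂ : Matrix (Fin n) (Fin n) ℂ}
    (h : IsMCoreEPDecomp A A₁ A₂ k) : (∃ X, A ^ k = A₁ * X) ∧ ∃ Z, A₁ = A ^ k * Z := by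
  obtain ⟨hs, hr, -, hnil, -, h21⟩ := h
  constructor
  · have key : ∀ j : ℕ, ∃ X, A ^ j = A₁ * X + A₂ ^ j := by
      intro j
      induction j with
      | zero => exact ⟨0, by simp⟩
      | succ j ih =>
        obtain ⟨X, hX⟩ := ih
        refine ⟨A₁ * X + A₂ ^ j, ?_⟩
        calc A ^ (j + 1) = (A₁ + A₂) * (A₁ * X + A₂ ^ j) := by rw [pow_succ', hX, ← hs]
          _ = A₁ * (A₁ * X + A₂ ^ j) + (A₂ * A₁ * X + A₂ * A₂ ^ j) := by noncomm_ring
          _ = _ := by rw [h21, Matrix.zero_mul, zero_add, pow_succ']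
    obtain ⟨X, hX⟩ := key k
    exact ⟨X, by rw [hX, hnil, add_zero]⟩
  · obtain ⟨Y, hY⟩ := exists_eq_mul_of_rank_mul_eq A₁ A₁ (by rw [← pow_two, hr])
    have hAA : A * A₁ = A₁ * A₁ := by rw [hs, Matrix.add_mul, h21, add_zero]
    have key : ∀ j : ℕ, ∃ Z, A₁ = A ^ j * (A₁ * Z) := by
      intro j
      induction j with
      | zero => exact ⟨1, by simp⟩
      | succ j ih =>
        obtain ⟨Z, hZ⟩ := ih
        refine ⟨Y * Z, ?_⟩
        calc A₁ = A ^ j * (A₁ * Z) := hZ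
          _ = A ^ j * (A₁ * A₁ * Y * Z) := by rw [← hY]
          _ = _ := by rw [← hAA, pow_succ]; simp only [Matrix.mul_assoc]
    obtain ⟨Z, hZ⟩ := key k
    exact ⟨_, hZ⟩

/-- The m-core-EP decomposition is unique. -/
theorem mCoreEPDecomp_unique {n k : ℕ}
    (A A₁ A₂ B₁ B₂ : Matrix (Fin n) (Fin n) ℂ) (hk : IsInd A k)
    (hrk : (A ^ k).rank = (madj (A ^ k) * A ^ k).rank)
    (hA : IsMCoreEPDecomp A A₁ A₂ k) (hB : IsMCoreEPDecomp A B₁ B₂ k) :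
    A₁ = B₁ ∧ A₂ = B₂ := by
  obtain ⟨⟨X, hX⟩, ⟨Z, hZ⟩⟩ := hA.range_eq
  obtain ⟨⟨X', hX'⟩, ⟨Z', hZ'⟩⟩ := hB.range_eq
  obtain ⟨hAs, -, -, -, hA12, -⟩ := hA
  obtain ⟨hBs, -, hBr, -, hB12, -⟩ := hB
  have hY : A₁ = B₁ * (X' * Z) := by rw [← Matrix.mul_assoc, ← hX', ← hZ]
  have hW : B₁ = A₁ * (X * Z') := by rw [← Matrix.mul_assoc, ← hX, ← hZ']
  have h1 : madj B₁ * A = madj B₁ * A₁ := by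
    have h0 : madj B₁ * A₂ = 0 := by
      rw [hW, madj_mul, Matrix.mul_assoc, hA12, Matrix.mul_zero]
    rw [hAs, Matrix.mul_add, h0, add_zero]
  have h2 : madj B₁ * A = madj B₁ * B₁ := by
    rw [hBs, Matrix.mul_add, hB12, add_zero]
  have h3 : madj B₁ * B₁ * (X' * Z - 1) = 0 := by
    rw [Matrix.mul_sub, Matrix.mul_one, Matrix.mul_assoc, ← hY, ← h1, h2, sub_self]
  have h4 := mul_eq_zero_of_rank_mul_eq _ _ _ hBr h3
  rw [Matrix.mul_sub, Matrix.mul_one, ← hY, sub_eq_zero] at h4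
  refine ⟨h4, ?_⟩
  rw [hAs, h4] at hBs
  exact add_left_cancel hBs
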